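/- arXiv:2108.02990 — 3 statements merged into one kernel-verified Lean document; each statement's English description precedes it below -/
import Mathlib

section
/- Let n ≥ 0 be an integer, m > 0, K > 0, 0 ≤ Δ ≤ 1, γ̄ > 0 and s ≤ 0. Then the generalized moment generating function of order n of the FTR model admits the closed form ∫₀^∞ xⁿ exp(sx) f_FTR(x; γ̄, m, K, Δ) dx = n! · m^m · (1+K−γ̄s)^{m−n−1} · γ̄ⁿ · Σ_{l=0}^n C(n,l) · ((m)_l / l!) · (1+K)^{l+1} K^l / ( m(1+K) − (m+K−KΔ)γ̄s )^{m+l} · Σ_{q=0}^l C(l,q) · (1−Δ)^{l−q} (2Δ)^q · ( Γ(1/2+q)Γ(1/2) / (π Γ(q+1)) ) · ₂F₁( m+l, 1/2+q; q+1; 2KΔγ̄s / ( m(1+K) − (m+K−KΔ)γ̄s ) ). -/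
/-!
Since all factors are nonnegative and the integrand is dominated uniformly in `θ`
(`jointF_integrable`), the `x`- and `θ`-integrals can be exchanged. For fixed `θ` the `x`-integral is
a Laplace transform of `x^n ₁F₁(m; 1; βx)`. Integrating the series term by term gives
`n!/p^(n+1) ∑ C(n+k, n) (m)_k/k! (β/p)^k`, and Vandermonde's identity together with the binomial
series turns this into a finite sum over `l ≤ n` (`hasSum_choose`, `laplace_hyp1F1`). After
simplification (`term_algebra`) the dependence on `θ` is through
`(1 + Δ cos θ)^l / (m(1+K) - (m + K(1 + Δ cos θ))gs)^(m+l)`. The substitution `t = (1 + cos θ)/2`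
makes the denominator affine in `t`; expanding `(1 + Δ cos θ)^l = ((1-Δ) + 2Δt)^l` produces
Euler integrals of `₂F₁(m+l, 1/2+q; q+1; Z)` (`gamma_twoF1`, `theta_integral`).
-/

open MeasureTheory Real

/-- Pochhammer symbol (ascending factorial) `(a)_k`. -/
noncomputable def poch (a : ℝ) (k : ℕ) : ℝ := ∏ i ∈ Finset.range k, (a + i)

/-- Confluent hypergeometric function `₁F₁(a; 1; z)`. -/
noncomputable def hyp1F1 (a z : ℝ) : ℝ := ∑' k : ℕ, poch a k * z ^ k / ((Nat.factorial k : ℝ)) ^ 2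

/-- The FTR density `f_FTR(x; γ̄, m, K, Δ)`. -/
noncomputable def fFTR (g m K Δ x : ℝ) : ℝ :=
  (1 / π) * ∫ θ in (0 : ℝ)..π,
    (m / (m + K * (1 + Δ * Real.cos θ))) ^ m * ((1 + K) / g) * Real.exp (-(1 + K) * x / g) *
      hyp1F1 m (K * (1 + K) * (1 + Δ * Real.cos θ) * x / (g * (m + K * (1 + Δ * Real.cos θ))))

/-- Gauss hypergeometric function `₂F₁(a, b; c; z)` via Euler's integral representation. -/
noncomputable def twoF1 (a b c z : ℝ) : ℝ :=
  (Real.Gamma c / (Real.Gamma b * Real.Gamma (c - b))) *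
    ∫ t in (0 : ℝ)..1, t ^ (b - 1) * (1 - t) ^ (c - b - 1) * (1 - t * z) ^ (-a)

theorem poch_nonneg {m : ℝ} (hm : 0 < m) (k : ℕ) : 0 ≤ poch m k :=
  Finset.prod_nonneg fun i _ => by positivity

theorem poch_add (m : ℝ) (l j : ℕ) : poch m (l + j) = poch m l * poch (m + l) j := by
  simp only [poch, Finset.prod_range_add]
  congr 1
  exact Finset.prod_congr rfl fun i _ => by push_cast; ring

theorem poch_div_factorial (m : ℝ) (k : ℕ) :
    poch m k / (Nat.factorial k : ℝ) = Ring.choose (m + k - 1) k := by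
  have h1 : poch m k = (ascPochhammer ℝ k).eval m := by
    induction k with
    | zero => simp [poch]
    | succ k ih =>
      rw [poch, Finset.prod_range_succ, ascPochhammer_succ_eval, ← ih, poch]
  have h2 := Ring.factorial_nsmul_multichoose_eq_ascPochhammer m k
  rw [Polynomial.ascPochhammer_smeval_eq_eval, ← h1, nsmul_eq_mul] at h2
  have h3 : Ring.choose (m + k - 1) k = Ring.multichoose m k := by
    rw [Ring.choose]; congr 1; ring
  rw [h3, ← h2]
  field_simp

/-- The binomial series `∑ (m)_k / k! w^k = (1 - w)^(-m)`. -/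
theorem hasSum_binomial (m : ℝ) {w : ℝ} (h0 : 0 ≤ w) (h1 : w < 1) :
    HasSum (fun k : ℕ => poch m k / (Nat.factorial k : ℝ) * w ^ k) ((1 - w) ^ (-m)) := by
  have h := (Real.one_div_one_sub_rpow_hasFPowerSeriesOnBall_zero m).hasSum (y := w)
    (by
      rw [← ENNReal.ofReal_one, Metric.eball_ofReal]
      simpa [abs_of_nonneg h0] using h1)
  simp only [zero_add, FormalMultilinearSeries.ofScalars_apply_eq, smul_eq_mul,
    ← poch_div_factorial] at h
  rw [Real.rpow_neg (by linarith), ← one_div]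
  exact h

/-- The binomial series weighted by `C(k, l)`: since `(m)_{l+j} = (m)_l (m+l)_j`, it is the binomial
series with parameter `m + l`, shifted by `l` places. -/
theorem hasSum_shift (m : ℝ) {w : ℝ} (h0 : 0 ≤ w) (h1 : w < 1) (l : ℕ) :
    HasSum (fun k : ℕ => (k.choose l : ℝ) * (poch m k / (Nat.factorial k : ℝ)) * w ^ k)
      (poch m l / (Nat.factorial l : ℝ) * w ^ l * (1 - w) ^ (-(m + l))) := by
  have h := (hasSum_binomial (m + l) h0 h1).mul_left (poch m l / (Nat.factorial l : ℝ) * w ^ l)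
  rw [← hasSum_nat_add_iff' l]
  have hz : ∑ i ∈ Finset.range l,
      (i.choose l : ℝ) * (poch m i / (Nat.factorial i : ℝ)) * w ^ i = 0 := by
    refine Finset.sum_eq_zero fun i hi => ?_
    simp [Nat.choose_eq_zero_of_lt (Finset.mem_range.1 hi)]
  rw [hz, sub_zero]
  refine h.congr_fun fun j => ?_
  have hc : ((j + l).choose l : ℝ) * ((Nat.factorial j : ℝ) * Nat.factorial l)
      = Nat.factorial (j + l) := by
    rw [← mul_assoc]; exact_mod_cast Nat.add_choose_mul_factorial_mul_factorial j l
  rw [add_comm j l, poch_add, add_comm l j, ← hc, pow_add]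
  have : ((j + l).choose l : ℝ) ≠ 0 := by
    exact_mod_cast (Nat.choose_pos (Nat.le_add_left l j)).ne'
  field_simp

/-- A terminating form of `₂F₁(m, n+1; 1; w)`, obtained from Vandermonde's identity
`C(n+k, n) = ∑ l, C(n, l) C(k, l)`; it plays the role of the Pfaff transformation. -/
theorem hasSum_choose (n : ℕ) (m : ℝ) {w : ℝ} (h0 : 0 ≤ w) (h1 : w < 1) :
    HasSum (fun k : ℕ => ((n + k).choose n : ℝ) * (poch m k / (Nat.factorial k : ℝ)) * w ^ k)
      (∑ l ∈ Finset.range (n + 1), (n.choose l : ℝ) *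
        (poch m l / (Nat.factorial l : ℝ) * w ^ l * (1 - w) ^ (-(m + l)))) := by
  have h := hasSum_sum (s := Finset.range (n + 1))
    fun l _ => (hasSum_shift m h0 h1 l).mul_left (n.choose l : ℝ)
  refine h.congr_fun fun k => ?_
  have hv : ((n + k).choose n : ℝ) = ∑ l ∈ Finset.range (n + 1), (n.choose l : ℝ) * k.choose l := by
    rw [Nat.add_choose_eq, Finset.Nat.sum_antidiagonal_eq_sum_range_succ_mk]
    push_cast
    rw [← Finset.sum_range_reflect]
    refine Finset.sum_congr rfl fun l hl => ?_
    have : l ≤ n := Nat.lt_succ_iff.1 (Finset.mem_range.1 hl)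
    rw [show n + 1 - 1 - l = n - l by omega, Nat.choose_symm this, show n - (n - l) = l by omega]
  rw [hv, Finset.sum_mul, Finset.sum_mul]
  exact Finset.sum_congr rfl fun l _ => by ring

/-- The `₁F₁` series converges for every real `z`: the absolute values of its terms are the diagonal of
the product of the binomial series at `1/2` and the exponential series at `|2z|`. -/
theorem summable_hyp1F1 {m : ℝ} (hm : 0 < m) (z : ℝ) :
    Summable (fun k : ℕ => poch m k * z ^ k / ((Nat.factorial k : ℝ)) ^ 2) := by
  have h1 := (hasSum_binomial m (w := 1 / 2) (by norm_num) (by norm_num)).summable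
  have h2 := (Real.summable_pow_div_factorial |2 * z|)
  refine Summable.of_norm ?_
  refine ((h1.mul_of_nonneg h2 (fun k => ?_) (fun k => by positivity)).comp_injective
    (i := fun k : ℕ => (k, k)) fun a b h => congrArg Prod.fst h).congr fun k => ?_
  · have := poch_nonneg hm k
    positivity
  · have := poch_nonneg hm k
    simp only [Function.comp, Real.norm_eq_abs, abs_div, abs_mul, abs_pow, abs_of_nonneg this,
      Nat.abs_cast, Nat.abs_ofNat, mul_pow, one_div, inv_pow]
    field_simp

theorem measurable_hyp1F1 {m : ℝ} (hm : 0 < m) : Measurable (hyp1F1 m) := by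
  refine measurable_of_tendsto_metrizable (f := fun N z => ∑ k ∈ Finset.range N,
    poch m k * z ^ k / ((Nat.factorial k : ℝ)) ^ 2) (fun N => by fun_prop) ?_
  rw [tendsto_pi_nhds]
  exact fun z => (summable_hyp1F1 hm z).hasSum.tendsto_sum_nat

theorem hyp1F1_nonneg {m z : ℝ} (hm : 0 < m) (hz : 0 ≤ z) : 0 ≤ hyp1F1 m z :=
  tsum_nonneg fun k => by have := poch_nonneg hm k; positivity

theorem hyp1F1_mono {m z z' : ℝ} (hm : 0 < m) (hz : 0 ≤ z) (h : z ≤ z') :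
    hyp1F1 m z ≤ hyp1F1 m z' :=
  (summable_hyp1F1 hm z).tsum_le_tsum (fun k => by have := poch_nonneg hm k; gcongr)
    (summable_hyp1F1 hm z')

theorem moment {p : ℝ} (hp : 0 < p) (N : ℕ) :
    ∫ x in Set.Ioi (0 : ℝ), x ^ N * Real.exp (-(p * x)) = (Nat.factorial N : ℝ) / p ^ (N + 1) := by
  have h := Real.integral_rpow_mul_exp_neg_mul_Ioi (a := N + 1) (by positivity) hp
  rw [Real.Gamma_nat_eq_factorial] at h
  simp only [add_sub_cancel_right, Real.rpow_natCast] at h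
  rw [h]
  have : (1 / p) ^ ((N : ℝ) + 1) = 1 / p ^ (N + 1) := by
    rw [← Nat.cast_succ, Real.rpow_natCast]; simp
  rw [this]; ring

/-- A non-integrable function has Bochner integral `0`, whereas `moment` gives a positive value. -/
theorem moment_integrable {p : ℝ} (hp : 0 < p) (N : ℕ) :
    IntegrableOn (fun x : ℝ => x ^ N * Real.exp (-(p * x))) (Set.Ioi 0) := by
  by_contra h
  have h1 := moment hp N
  rw [integral_undef h] at h1
  have : 0 < (Nat.factorial N : ℝ) / p ^ (N + 1) := by positivity
  linarith

/-- The Laplace transform of `x^n ₁F₁(m; 1; βx)`, integrated term by term and summed by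
`hasSum_choose`. -/
theorem laplace_hyp1F1 (n : ℕ) {m p β : ℝ} (hm : 0 < m) (h0 : 0 ≤ β) (h : β < p) :
    ∫ x in Set.Ioi (0 : ℝ), x ^ n * Real.exp (-(p * x)) * hyp1F1 m (β * x) =
      (Nat.factorial n : ℝ) / p ^ (n + 1) * ∑ l ∈ Finset.range (n + 1), (n.choose l : ℝ) *
        (poch m l / (Nat.factorial l : ℝ) * (β / p) ^ l * (1 - β / p) ^ (-(m + l))) := by
  have hp : 0 < p := h0.trans_lt h
  let F : ℕ → ℝ → ℝ := fun k x =>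
    poch m k * β ^ k / (Nat.factorial k : ℝ) ^ 2 * (x ^ (n + k) * Real.exp (-(p * x)))
  have hF : ∀ k, ∫ x in Set.Ioi (0 : ℝ), F k x =
      (Nat.factorial n : ℝ) / p ^ (n + 1) *
        (((n + k).choose n : ℝ) * (poch m k / (Nat.factorial k : ℝ)) * (β / p) ^ k) := by
    intro k
    have hc : ((n + k).choose n : ℝ) * Nat.factorial n * Nat.factorial k
        = Nat.factorial (n + k) := by
      have := Nat.add_choose_mul_factorial_mul_factorial n k
      rw [Nat.choose_symm_add]
      exact_mod_cast this
    simp only [F]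
    rw [integral_const_mul, moment hp, ← hc, div_pow, add_right_comm, pow_add p (n + 1) k]
    field_simp
  have hsum := (hasSum_choose n m (div_nonneg h0 hp.le) ((div_lt_one hp).2 h)).mul_left
    ((Nat.factorial n : ℝ) / p ^ (n + 1))
  have key := hasSum_integral_of_summable_integral_norm
    (μ := volume.restrict (Set.Ioi (0 : ℝ))) (F := F)
    (fun k => (moment_integrable hp (n + k)).const_mul _) (by
      refine hsum.summable.congr fun k => ?_
      rw [← hF]
      refine setIntegral_congr_fun measurableSet_Ioi fun x hx => ?_
      have hx : 0 < x := hx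
      have := poch_nonneg hm k
      exact (Real.norm_of_nonneg (by simp only [F]; positivity)).symm)
  have h2 := key.unique (hsum.congr_fun hF)
  rw [← h2]
  refine setIntegral_congr_fun measurableSet_Ioi fun x _ => ?_
  simp only [hyp1F1, F]
  rw [← tsum_mul_left]
  refine tsum_congr fun k => ?_
  rw [mul_pow, pow_add]
  ring

/-- As in `moment_integrable`, the value found in `laplace_hyp1F1` is positive, so the integral is not
the junk value of a divergent one. -/
theorem laplace_integrable (n : ℕ) {m p β : ℝ} (hm : 0 < m) (h0 : 0 ≤ β) (h : β < p) :
    IntegrableOn (fun x : ℝ => x ^ n * Real.exp (-(p * x)) * hyp1F1 m (β * x)) (Set.Ioi 0) := by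
  by_contra hi
  have h1 := laplace_hyp1F1 n hm h0 h
  rw [integral_undef hi] at h1
  have hp : 0 < p := h0.trans_lt h
  have hw : 0 < 1 - β / p := by rw [sub_pos, div_lt_one hp]; exact h
  have hpos : 0 < ∑ l ∈ Finset.range (n + 1), (n.choose l : ℝ) *
        (poch m l / (Nat.factorial l : ℝ) * (β / p) ^ l * (1 - β / p) ^ (-(m + l))) := by
    refine Finset.sum_pos' (fun l _ => ?_) ⟨0, by simp, ?_⟩
    · have := poch_nonneg hm l
      positivity
    · simp [poch]; positivity
  have : (0 : ℝ) < (Nat.factorial n : ℝ) / p ^ (n + 1) := by positivity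
  have := mul_pos this hpos
  linarith

/-- Each summand of `laplace_hyp1F1`, taken with `p = (1+K)/g - s` and
`β = K(1+K)c/(g(m+Kc))` and multiplied by the FTR prefactor, in terms of
`E = m(1+K) - (m+Kc)gs`; the point is that `1 - β/p = E / ((m+Kc)(1+K-gs))`. -/
theorem term_algebra (n l : ℕ) {m K c g s : ℝ} (hm : 0 < m) (hK : 0 < K) (hc : 0 ≤ c) (hg : 0 < g)
    (hs : s ≤ 0) :
    (m / (m + K * c)) ^ m * ((1 + K) / g) * (1 / ((1 + K) / g - s) ^ (n + 1) *
      ((K * (1 + K) * c / (g * (m + K * c)) / ((1 + K) / g - s)) ^ l *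
      (1 - K * (1 + K) * c / (g * (m + K * c)) / ((1 + K) / g - s)) ^ (-(m + l)))) =
    m ^ m * (1 + K - g * s) ^ (m - n - 1 : ℝ) * g ^ n *
      ((1 + K) ^ (l + 1) * K ^ l * c ^ l / (m * (1 + K) - (m + K * c) * g * s) ^ (m + l : ℝ)) := by
  have hgs : 0 ≤ -(g * s) := by nlinarith
  have hA : 0 < m + K * c := by positivity
  have hP : 0 < 1 + K - g * s := by linarith
  have hE : 0 < m * (1 + K) - (m + K * c) * g * s := by
    have := mul_nonneg hA.le hgs
    nlinarith [mul_pos hm hK]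
  have e1 : (1 + K) / g - s = (1 + K - g * s) / g := by field_simp
  have e2 : K * (1 + K) * c / (g * (m + K * c)) / ((1 + K) / g - s) =
      K * (1 + K) * c / ((m + K * c) * (1 + K - g * s)) := by
    rw [e1]; field_simp
  have e3 : 1 - K * (1 + K) * c / ((m + K * c) * (1 + K - g * s)) =
      (m * (1 + K) - (m + K * c) * g * s) / ((m + K * c) * (1 + K - g * s)) := by
    field_simp; ring
  rw [e2, e3, e1]
  set A := m + K * c
  set P := 1 + K - g * s
  set E := m * (1 + K) - A * g * s
  rw [Real.rpow_neg (by positivity), Real.div_rpow hE.le (by positivity),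
    Real.mul_rpow hA.le hP.le, Real.div_rpow hm.le hA.le, Real.rpow_add hA, Real.rpow_add hP,
    Real.rpow_natCast, Real.rpow_natCast,
    show m - (n : ℝ) - 1 = m - ((n + 1 : ℕ) : ℝ) by push_cast; ring,
    Real.rpow_sub hP, Real.rpow_natCast]
  have := Real.rpow_pos_of_pos hA m
  have := Real.rpow_pos_of_pos hP m
  have := Real.rpow_pos_of_pos hE (m + l)
  have := Real.rpow_pos_of_pos hm m
  generalize E ^ (m + (l : ℝ)) = EE at *
  generalize A ^ m = AA at *
  generalize P ^ m = PP at *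
  generalize m ^ m = MM at *
  rw [div_pow, div_pow, mul_pow, mul_pow, mul_pow]
  field_simp
  ring

/-- The substitution `t = (1 + cos θ)/2` in Euler's integral with parameters `b = 1/2 + q`, `c = q + 1`;
the factor `(t(1-t))^(-1/2)` cancels against the Jacobian `sin θ / 2`. -/
theorem euler_trig (q : ℕ) (a Z : ℝ) :
    ∫ t in (0 : ℝ)..1, t ^ ((1 / 2 + q : ℝ) - 1) * (1 - t) ^ ((q + 1 : ℝ) - (1 / 2 + q) - 1) *
        (1 - t * Z) ^ (-a) =
      ∫ θ in (0 : ℝ)..π, ((1 + Real.cos θ) / 2) ^ q * (1 - (1 + Real.cos θ) / 2 * Z) ^ (-a) := by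
  rw [intervalIntegral.integral_of_le zero_le_one, intervalIntegral.integral_of_le Real.pi_pos.le,
    integral_Ioc_eq_integral_Ioo, integral_Ioc_eq_integral_Ioo]
  have himg : (fun θ => (1 + Real.cos θ) / 2) '' Set.Ioo 0 π = Set.Ioo (0 : ℝ) 1 := by
    ext y
    constructor
    · rintro ⟨θ, ⟨h0, h1⟩, rfl⟩
      have a1 := Real.cos_lt_cos_of_nonneg_of_le_pi le_rfl h1.le h0
      have a2 := Real.cos_lt_cos_of_nonneg_of_le_pi h0.le le_rfl h1
      rw [Real.cos_zero] at a1
      rw [Real.cos_pi] at a2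
      constructor <;> simp only <;> linarith
    · rintro ⟨h0, h1⟩
      refine ⟨Real.arccos (2 * y - 1), ⟨Real.arccos_pos.2 (by linarith), ?_⟩, ?_⟩
      · refine lt_of_le_of_ne (Real.arccos_le_pi _) fun h => ?_
        rw [Real.arccos_eq_pi] at h
        linarith
      · simp only
        rw [Real.cos_arccos (by linarith) (by linarith)]
        ring
  rw [← himg, integral_image_eq_integral_abs_deriv_smul (f' := fun θ => -Real.sin θ / 2)
    measurableSet_Ioo]
  · refine setIntegral_congr_fun measurableSet_Ioo fun θ hθ => ?_
    have hs := Real.sin_pos_of_mem_Ioo hθ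
    have hmem : (1 + Real.cos θ) / 2 ∈ Set.Ioo (0 : ℝ) 1 := himg ▸ Set.mem_image_of_mem _ hθ
    set t := (1 + Real.cos θ) / 2 with ht
    have h0 : 0 < t := hmem.1
    have h1 : 0 < 1 - t := sub_pos.2 hmem.2
    have hst : |-Real.sin θ / 2| = t ^ (1 / 2 : ℝ) * (1 - t) ^ (1 / 2 : ℝ) := by
      rw [← Real.mul_rpow h0.le h1.le, ← Real.sqrt_eq_rpow, neg_div, abs_neg,
        abs_of_pos (by linarith)]
      symm
      rw [Real.sqrt_eq_iff_mul_self_eq_of_pos (by linarith)]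
      have := Real.sin_sq_add_cos_sq θ
      rw [ht]
      nlinarith
    have e1 : t ^ (1 / 2 : ℝ) * t ^ ((1 / 2 + q : ℝ) - 1) = t ^ q := by
      rw [← Real.rpow_add h0, ← Real.rpow_natCast]; congr 1; ring
    have e2 : (1 - t) ^ (1 / 2 : ℝ) * (1 - t) ^ ((q + 1 : ℝ) - (1 / 2 + q) - 1) = 1 := by
      rw [← Real.rpow_add h1,
        show (1 / 2 : ℝ) + ((q + 1 : ℝ) - (1 / 2 + q) - 1) = 0 by ring, Real.rpow_zero]
    simp only [smul_eq_mul]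
    rw [hst]
    calc _ = (t ^ (1 / 2 : ℝ) * t ^ ((1 / 2 + q : ℝ) - 1)) *
          ((1 - t) ^ (1 / 2 : ℝ) * (1 - t) ^ ((q + 1 : ℝ) - (1 / 2 + q) - 1)) *
          (1 - t * Z) ^ (-a) := by ring
      _ = _ := by rw [e1, e2, mul_one]
  · intro θ _
    have := ((Real.hasDerivAt_cos θ).const_add 1).div_const 2
    exact this.hasDerivWithinAt
  · intro x hx y hy h
    refine Real.injOn_cos ⟨hx.1.le, hx.2.le⟩ ⟨hy.1.le, hy.2.le⟩ ?_
    simp only at h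
    linarith

theorem gamma_twoF1 (q : ℕ) (a Z : ℝ) :
    (Real.Gamma (1 / 2 + q) * Real.Gamma (1 / 2) / (π * Real.Gamma (q + 1))) *
        twoF1 a (1 / 2 + q) (q + 1) Z =
      1 / π * ∫ θ in (0 : ℝ)..π,
        ((1 + Real.cos θ) / 2) ^ q * (1 - (1 + Real.cos θ) / 2 * Z) ^ (-a) := by
  rw [twoF1, euler_trig, show (q + 1 : ℝ) - (1 / 2 + q) = 1 / 2 by ring]
  have h1 : Real.Gamma (1 / 2 + q) ≠ 0 := (Real.Gamma_pos_of_pos (by positivity)).ne'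
  have h2 : Real.Gamma (1 / 2) ≠ 0 := (Real.Gamma_pos_of_pos (by positivity)).ne'
  have h3 : Real.Gamma (q + 1) ≠ 0 := (Real.Gamma_pos_of_pos (by positivity)).ne'
  have h4 := Real.pi_ne_zero
  generalize ∫ θ in (0 : ℝ)..π, ((1 + Real.cos θ) / 2) ^ q *
    (1 - (1 + Real.cos θ) / 2 * Z) ^ (-a) = I
  field_simp

/-- The average over `θ`. With `t = (1 + cos θ)/2` the denominator is `D(1 - tZ)` and
`1 + Δ cos θ = (1 - Δ) + 2Δt` is expanded by the binomial theorem. -/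
theorem theta_integral (l : ℕ) {m K Δ g s : ℝ} (hm : 0 < m) (hK : 0 < K)
    (hΔ0 : 0 ≤ Δ) (hΔ1 : Δ ≤ 1) (hg : 0 < g) (hs : s ≤ 0) :
    1 / π * ∫ θ in (0 : ℝ)..π, ((1 + K) ^ (l + 1) * K ^ l * (1 + Δ * Real.cos θ) ^ l /
        (m * (1 + K) - (m + K * (1 + Δ * Real.cos θ)) * g * s) ^ (m + l : ℝ)) =
      ((1 + K) ^ (l + 1) * K ^ l /
            (m * (1 + K) - (m + K - K * Δ) * g * s) ^ (m + l : ℝ)) *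
          ∑ q ∈ Finset.range (l + 1), (l.choose q : ℝ) * (1 - Δ) ^ (l - q) * (2 * Δ) ^ q *
            (Real.Gamma (1 / 2 + q) * Real.Gamma (1 / 2) / (π * Real.Gamma (q + 1))) *
            twoF1 (m + l) (1 / 2 + q) (q + 1)
              (2 * K * Δ * g * s / (m * (1 + K) - (m + K - K * Δ) * g * s)) := by
  have hgs : 0 ≤ -(g * s) := by nlinarith
  have hD : 0 < m * (1 + K) - (m + K - K * Δ) * g * s := by
    have h1 : 0 ≤ m + K - K * Δ := by nlinarith
    have := mul_nonneg h1 hgs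
    nlinarith [mul_pos hm hK]
  set D := m * (1 + K) - (m + K - K * Δ) * g * s with hDdef
  set Z := 2 * K * Δ * g * s / D with hZ
  have hZ0 : Z ≤ 0 := by
    refine div_nonpos_of_nonpos_of_nonneg ?_ hD.le
    have : 0 ≤ K * Δ * -(g * s) := by positivity
    linarith
  have ht : ∀ θ : ℝ, 0 ≤ (1 + Real.cos θ) / 2 := fun θ => by linarith [Real.neg_one_le_cos θ]
  have hbase : ∀ θ : ℝ, 0 < 1 - (1 + Real.cos θ) / 2 * Z := fun θ => by
    have := mul_nonneg (ht θ) (neg_nonneg.2 hZ0)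
    linarith
  have hpt : ∀ θ : ℝ, (1 + K) ^ (l + 1) * K ^ l * (1 + Δ * Real.cos θ) ^ l /
        (m * (1 + K) - (m + K * (1 + Δ * Real.cos θ)) * g * s) ^ (m + l : ℝ) =
      ((1 + K) ^ (l + 1) * K ^ l / D ^ (m + l : ℝ)) *
        ∑ q ∈ Finset.range (l + 1), (l.choose q : ℝ) * (1 - Δ) ^ (l - q) * (2 * Δ) ^ q *
          (((1 + Real.cos θ) / 2) ^ q * (1 - (1 + Real.cos θ) / 2 * Z) ^ (-(m + l))) := by
    intro θ
    have e1 : m * (1 + K) - (m + K * (1 + Δ * Real.cos θ)) * g * s =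
        D * (1 - (1 + Real.cos θ) / 2 * Z) := by
      rw [mul_sub, hZ]; field_simp; rw [hDdef]; ring
    have e2 : (1 + Δ * Real.cos θ) ^ l = ∑ q ∈ Finset.range (l + 1),
        (l.choose q : ℝ) * (1 - Δ) ^ (l - q) * (2 * Δ) ^ q * ((1 + Real.cos θ) / 2) ^ q := by
      rw [show 1 + Δ * Real.cos θ = 2 * Δ * ((1 + Real.cos θ) / 2) + (1 - Δ) by ring, add_pow]
      refine Finset.sum_congr rfl fun q _ => ?_
      rw [mul_pow]; ring
    rw [e1, Real.mul_rpow hD.le (hbase θ).le, e2, Real.rpow_neg (hbase θ).le]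
    simp only [← mul_assoc]
    rw [← Finset.sum_mul]
    have := Real.rpow_pos_of_pos (hbase θ) (m + l)
    have := Real.rpow_pos_of_pos hD (m + l)
    field_simp
  simp only [hpt]
  rw [intervalIntegral.integral_const_mul, intervalIntegral.integral_finsetSum]
  · rw [mul_left_comm, Finset.mul_sum]
    congr 1
    refine Finset.sum_congr rfl fun q _ => ?_
    rw [mul_assoc _ (_ / _) (twoF1 _ _ _ _), gamma_twoF1, intervalIntegral.integral_const_mul]
    ring
  · intro q _
    refine Continuous.intervalIntegrable ?_ _ _
    have : Continuous fun θ : ℝ => (1 - (1 + Real.cos θ) / 2 * Z) ^ (-(m + l)) :=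
      Continuous.rpow_const (by fun_prop) fun θ => Or.inl (hbase θ).ne'
    fun_prop

/-- The integrand `x^n e^{sx}` times the integrand of `fFTR`, as a function of `(x, θ)`, without the
factor `1/π` and with the two exponentials merged. -/
noncomputable def jointF (n : ℕ) (g m K Δ s x θ : ℝ) : ℝ :=
  (m / (m + K * (1 + Δ * Real.cos θ))) ^ m * ((1 + K) / g) *
    (x ^ n * Real.exp (-(((1 + K) / g - s) * x)) *
      hyp1F1 m (K * (1 + K) * (1 + Δ * Real.cos θ) / (g * (m + K * (1 + Δ * Real.cos θ))) * x))

/-- The growth rate of the `₁F₁` factor is below the decay rate of the exponential. -/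
theorem rate_lt {m K c g s : ℝ} (hm : 0 < m) (hK : 0 < K) (hc : 0 ≤ c) (hg : 0 < g) (hs : s ≤ 0) :
    K * (1 + K) * c / (g * (m + K * c)) < (1 + K) / g - s := by
  have : K * (1 + K) * c / (g * (m + K * c)) < (1 + K) / g := by
    rw [div_lt_div_iff₀ (by positivity) hg]
    have : 0 < (1 + K) * g * m := by positivity
    nlinarith
  linarith

/-- Since `1 + Δ cos θ ≤ 2` and `₁F₁(m; 1; ·)` is nondecreasing on `[0, ∞)`, the integrand is dominated,
uniformly in `θ`, by the function of `x` in which `1 + Δ cos θ` is replaced by `2`. -/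
theorem jointF_integrable (n : ℕ) {m K Δ g s : ℝ} (hm : 0 < m) (hK : 0 < K)
    (hΔ0 : 0 ≤ Δ) (hΔ1 : Δ ≤ 1) (hg : 0 < g) (hs : s ≤ 0) :
    Integrable (Function.uncurry (jointF n g m K Δ s))
      ((volume.restrict (Set.Ioi 0)).prod (volume.restrict (Set.Ioc 0 π))) := by
  have hdom := (((laplace_integrable n hm (by positivity)
    (rate_lt (c := 2) hm hK (by norm_num) hg hs)).integrable.const_mul
      ((1 + K) / g)).comp_fst (volume.restrict (Set.Ioc 0 π)))
  have hmeas := measurable_hyp1F1 hm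
  have hx : ∀ᵐ z : ℝ × ℝ ∂((volume.restrict (Set.Ioi 0)).prod (volume.restrict (Set.Ioc 0 π))),
      0 < z.1 := by
    have : ∀ᵐ x : ℝ ∂(volume.restrict (Set.Ioi 0)), 0 < x := ae_restrict_mem measurableSet_Ioi
    exact Measure.quasiMeasurePreserving_fst.ae this
  refine hdom.mono' ?_ ?_
  · refine Measurable.aestronglyMeasurable ?_
    unfold jointF Function.uncurry
    fun_prop
  · filter_upwards [hx] with ⟨x, θ⟩ hx
    simp only at hx
    simp only [Function.uncurry, jointF]
    have hcos := Real.neg_one_le_cos θ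
    have hcos' := Real.cos_le_one θ
    have hc : 0 ≤ 1 + Δ * Real.cos θ := by nlinarith
    have hc2 : 1 + Δ * Real.cos θ ≤ 2 := by nlinarith
    set c := 1 + Δ * Real.cos θ
    have hA : 0 < m + K * c := by positivity
    have hβ : 0 ≤ K * (1 + K) * c / (g * (m + K * c)) * x := by positivity
    have hle : K * (1 + K) * c / (g * (m + K * c)) * x ≤
        K * (1 + K) * 2 / (g * (m + K * 2)) * x := by
      refine mul_le_mul_of_nonneg_right ?_ hx.le
      rw [div_le_div_iff₀ (by positivity) (by positivity)]
      have : 0 ≤ K * (1 + K) * g * m * (2 - c) := by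
        have := sub_nonneg.2 hc2
        positivity
      nlinarith
    have h1 := hyp1F1_nonneg hm hβ
    have h2 := hyp1F1_mono hm hβ hle
    have h3 : (m / (m + K * c)) ^ m ≤ 1 :=
      Real.rpow_le_one (by positivity) ((div_le_one hA).2 (by nlinarith [mul_nonneg hK.le hc])) hm.le
    rw [Real.norm_of_nonneg (by positivity)]
    have h4 : (m / (m + K * c)) ^ m * ((1 + K) / g) ≤ (1 + K) / g :=
      mul_le_of_le_one_left (by positivity) h3
    gcongr

theorem integral_jointF (n : ℕ) {m K Δ g s θ : ℝ} (hm : 0 < m) (hK : 0 < K)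
    (hΔ0 : 0 ≤ Δ) (hΔ1 : Δ ≤ 1) (hg : 0 < g) (hs : s ≤ 0) :
    ∫ x in Set.Ioi (0 : ℝ), jointF n g m K Δ s x θ =
      (Nat.factorial n : ℝ) * m ^ m * (1 + K - g * s) ^ (m - n - 1 : ℝ) * g ^ n *
        ∑ l ∈ Finset.range (n + 1), (n.choose l : ℝ) * (poch m l / (Nat.factorial l : ℝ)) *
          ((1 + K) ^ (l + 1) * K ^ l * (1 + Δ * Real.cos θ) ^ l /
            (m * (1 + K) - (m + K * (1 + Δ * Real.cos θ)) * g * s) ^ (m + l : ℝ)) := by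
  have hcos := Real.neg_one_le_cos θ
  have hc : 0 ≤ 1 + Δ * Real.cos θ := by nlinarith
  simp only [jointF]
  set c := 1 + Δ * Real.cos θ
  rw [integral_const_mul, laplace_hyp1F1 n hm (by positivity) (rate_lt hm hK hc hg hs)]
  simp only [Finset.mul_sum]
  refine Finset.sum_congr rfl fun l _ => ?_
  have h := term_algebra n l hm hK hc hg hs
  linear_combination ((Nat.factorial n : ℝ) * n.choose l * (poch m l / (Nat.factorial l : ℝ))) * h

theorem stmt5 (n : ℕ) (m K Δ g s : ℝ) (hm : 0 < m) (hK : 0 < K)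
    (hΔ0 : 0 ≤ Δ) (hΔ1 : Δ ≤ 1) (hg : 0 < g) (hs : s ≤ 0) :
    ∫ x in Set.Ioi (0 : ℝ), x ^ n * Real.exp (s * x) * fFTR g m K Δ x =
      (Nat.factorial n : ℝ) * m ^ m * (1 + K - g * s) ^ (m - n - 1 : ℝ) * g ^ n *
        ∑ l ∈ Finset.range (n + 1), (n.choose l : ℝ) * (poch m l / (Nat.factorial l : ℝ)) *
          ((1 + K) ^ (l + 1) * K ^ l /
            (m * (1 + K) - (m + K - K * Δ) * g * s) ^ (m + l : ℝ)) *
          ∑ q ∈ Finset.range (l + 1), (l.choose q : ℝ) * (1 - Δ) ^ (l - q) * (2 * Δ) ^ q *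
            (Real.Gamma (1 / 2 + q) * Real.Gamma (1 / 2) / (π * Real.Gamma (q + 1))) *
            twoF1 (m + l) (1 / 2 + q) (q + 1)
              (2 * K * Δ * g * s / (m * (1 + K) - (m + K - K * Δ) * g * s)) := by
  have hfold : ∀ x : ℝ, x ^ n * Real.exp (s * x) * fFTR g m K Δ x =
      1 / π * ∫ θ in Set.Ioc (0 : ℝ) π, jointF n g m K Δ s x θ := by
    intro x
    rw [fFTR, intervalIntegral.integral_of_le Real.pi_pos.le, mul_left_comm, ← integral_const_mul]
    congr 2
    funext θ
    have he : Real.exp (-(((1 + K) / g - s) * x)) =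
        Real.exp (s * x) * Real.exp (-(1 + K) * x / g) := by
      rw [← Real.exp_add]; congr 1; ring
    have hz : K * (1 + K) * (1 + Δ * Real.cos θ) / (g * (m + K * (1 + Δ * Real.cos θ))) * x =
        K * (1 + K) * (1 + Δ * Real.cos θ) * x / (g * (m + K * (1 + Δ * Real.cos θ))) := by
      ring
    rw [jointF, he, hz]
    ring
  simp only [hfold]
  rw [integral_const_mul, integral_integral_swap (jointF_integrable n hm hK hΔ0 hΔ1 hg hs)]
  simp only [integral_jointF n hm hK hΔ0 hΔ1 hg hs]
  rw [← intervalIntegral.integral_of_le Real.pi_pos.le, intervalIntegral.integral_const_mul,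
    intervalIntegral.integral_finsetSum]
  · rw [mul_left_comm, Finset.mul_sum]
    congr 1
    refine Finset.sum_congr rfl fun l _ => ?_
    rw [intervalIntegral.integral_const_mul, mul_left_comm,
      theta_integral l hm hK hΔ0 hΔ1 hg hs, mul_assoc _ (_ / _) (Finset.sum _ _)]
  · intro l _
    refine Continuous.intervalIntegrable ?_ _ _
    have hEpos : ∀ θ : ℝ, 0 < m * (1 + K) - (m + K * (1 + Δ * Real.cos θ)) * g * s := by
      intro θ
      have hcos := Real.neg_one_le_cos θ
      have hc : 0 ≤ 1 + Δ * Real.cos θ := by nlinarith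
      have hA : 0 ≤ m + K * (1 + Δ * Real.cos θ) := by positivity
      have hgs : 0 ≤ -(g * s) := by nlinarith
      have := mul_nonneg hA hgs
      nlinarith [mul_pos hm hK]
    have hp : Continuous fun θ : ℝ =>
        (m * (1 + K) - (m + K * (1 + Δ * Real.cos θ)) * g * s) ^ (m + l : ℝ) :=
      Continuous.rpow_const (by fun_prop) fun θ => Or.inl (hEpos θ).ne'
    refine continuous_const.mul (Continuous.div (by fun_prop) hp fun θ => ?_)
    exact (Real.rpow_pos_of_pos (hEpos θ) _).ne'
end

section
/- Let m ≥ 1 be an integer, γ̄ > 0, K > 0, 0 ≤ Δ ≤ 1 and x ≥ 0. Then the cumulative distribution function of the FTR model satisfies ∫₀^x f_FTR(t; γ̄, m, K, Δ) dt = 1 − (1/π) ∫₀^π Σ_{i=0}^{m−1} C_i(θ) · exp(−x/Ω(θ)) · Σ_{r=0}^{m−i−1} (x/Ω(θ))^r / r! dθ, where C_i(θ) = C(m−1,i) · m^i (K(1+Δcos θ))^{m−1−i} / (m + K(1+Δcos θ))^{m−1} and Ω(θ) = (γ̄/(1+K)) · (m + K(1+Δcos θ))/m. -/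
/-!
For an integer `m = n + 1`, Kummer's transformation turns the hypergeometric factor into a
polynomial, `₁F₁(n + 1; 1; z) = e ^ z * ∑ k ≤ n, C(n, k) z ^ k / k!` (`hyp1F1_natCast_succ`); on
coefficients this is Vandermonde's identity `C(k + n, n) = ∑ j, C(n, j) C(k, j)`. For a fixed
angle put `L = (1 + K) / g`, `u = K (1 + Δ cos θ)` and `w = m / (m + u)`, so that
`1 / Ω = L * w` and `C_i = C(n, i) w ^ i (1 - w) ^ (n - i)`. After Kummer's transformation the
integrand is a binomial mixture of Erlang densities of rate `L * w`, which is minus the derivative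
of the mixture of Erlang survival functions (`hasDerivAt_erlangMixSurv`), and the latter equals
`(w + (1 - w)) ^ n = 1` at the origin. Since `m + u > 0` for every angle, everything is jointly
continuous in the angle and `t`, so the two integrations may be exchanged by Fubini.
-/

open MeasureTheory Real

/-- Mixture coefficient `C_i(θ)`. -/
noncomputable def Cmix (m : ℕ) (K Δ θ : ℝ) (i : ℕ) : ℝ :=
  ((m - 1).choose i : ℝ) * (m : ℝ) ^ i * (K * (1 + Δ * Real.cos θ)) ^ (m - 1 - i) /
    ((m : ℝ) + K * (1 + Δ * Real.cos θ)) ^ (m - 1)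

/-- Scale parameter `Ω(θ)`. -/
noncomputable def Ωmix (m : ℕ) (g K Δ θ : ℝ) : ℝ :=
  (g / (1 + K)) * (((m : ℝ) + K * (1 + Δ * Real.cos θ)) / (m : ℝ))

theorem factorial_mul_poch (n k : ℕ) :
    (n.factorial : ℝ) * poch ((n + 1 : ℕ) : ℝ) k = (k + n).factorial := by
  induction k with
  | zero => simp [poch]
  | succ k ih =>
    have h : poch ((n + 1 : ℕ) : ℝ) (k + 1) = poch ((n + 1 : ℕ) : ℝ) k * ((n + 1 : ℕ) + k) := by
      simp [poch, Finset.prod_range_succ]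
    rw [h, ← mul_assoc, ih, show k + 1 + n = (k + n) + 1 by ring, Nat.factorial_succ]
    push_cast
    ring

/-- Vandermonde's identity in symmetric form. -/
theorem choose_add_eq_sum (n k : ℕ) :
    (k + n).choose n = ∑ j ∈ Finset.range (n + 1), n.choose j * k.choose j := by
  rw [Nat.add_choose_eq, Finset.Nat.sum_antidiagonal_eq_sum_range_succ
    (fun i j => k.choose i * n.choose j)]
  refine Finset.sum_congr rfl fun j hj => ?_
  rw [Nat.choose_symm (Nat.lt_succ_iff.mp (Finset.mem_range.mp hj)), mul_comm]

theorem poch_div_factorial_sq (n k : ℕ) :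
    poch ((n + 1 : ℕ) : ℝ) k / (k.factorial : ℝ) ^ 2 =
      ((k + n).choose n : ℝ) / k.factorial := by
  have h1 := factorial_mul_poch n k
  have h2 : ((k + n).choose n : ℝ) * k.factorial * n.factorial = (k + n).factorial := by
    have := Nat.add_choose_mul_factorial_mul_factorial k n
    exact_mod_cast this
  have hk : (k.factorial : ℝ) ≠ 0 := by positivity
  have hn : (n.factorial : ℝ) ≠ 0 := by positivity
  rw [div_eq_div_iff (by positivity) hk]
  apply mul_left_cancel₀ hn
  linear_combination (k.factorial : ℝ) * h1 - (k.factorial : ℝ) * h2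

theorem hasSum_choose_mul_pow_div (z : ℝ) (j : ℕ) :
    HasSum (fun k : ℕ => (k.choose j : ℝ) * z ^ k / k.factorial)
      (Real.exp z * z ^ j / j.factorial) := by
  have h0 : HasSum (fun k : ℕ => z ^ k / k.factorial) (Real.exp z) := by
    rw [Real.exp_eq_exp_ℝ]
    exact NormedSpace.expSeries_div_hasSum_exp z
  -- The terms with `k < j` vanish; the others are the exponential series shifted by `j`.
  have h1 : ∑ i ∈ Finset.range j, (i.choose j : ℝ) * z ^ i / i.factorial = 0 := by
    refine Finset.sum_eq_zero fun i hi => ?_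
    rw [Nat.choose_eq_zero_of_lt (Finset.mem_range.mp hi)]
    simp
  have h2 := (hasSum_nat_add_iff (f := fun k : ℕ => (k.choose j : ℝ) * z ^ k / k.factorial) j
    (g := Real.exp z * z ^ j / j.factorial)).mp
  rw [h1, add_zero] at h2
  refine h2 ?_
  have h3 := h0.mul_right (z ^ j / j.factorial)
  rw [← mul_div_assoc] at h3
  refine h3.congr_fun ?_
  intro k
  have h4 : ((k + j).choose j : ℝ) * k.factorial * j.factorial = (k + j).factorial := by
    have := Nat.add_choose_mul_factorial_mul_factorial k j
    exact_mod_cast this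
  have h5 : ((k + j).choose j : ℝ) ≠ 0 := by
    exact_mod_cast (Nat.choose_pos (Nat.le_add_left j k)).ne'
  rw [← h4, pow_add]
  field_simp

/-- Kummer's transformation for a positive integer first parameter. -/
theorem hyp1F1_natCast_succ (n : ℕ) (z : ℝ) :
    hyp1F1 ((n + 1 : ℕ) : ℝ) z =
      Real.exp z * ∑ k ∈ Finset.range (n + 1), (n.choose k : ℝ) * z ^ k / k.factorial := by
  have h : HasSum (fun k : ℕ => ∑ j ∈ Finset.range (n + 1),
      (n.choose j : ℝ) * ((k.choose j : ℝ) * z ^ k / k.factorial))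
      (∑ j ∈ Finset.range (n + 1), (n.choose j : ℝ) * (Real.exp z * z ^ j / j.factorial)) :=
    hasSum_sum fun j _ => (hasSum_choose_mul_pow_div z j).mul_left _
  have h2 : hyp1F1 ((n + 1 : ℕ) : ℝ) z = ∑' k : ℕ, ∑ j ∈ Finset.range (n + 1),
      (n.choose j : ℝ) * ((k.choose j : ℝ) * z ^ k / k.factorial) := by
    unfold hyp1F1
    refine tsum_congr fun k => ?_
    rw [mul_div_right_comm, poch_div_factorial_sq, choose_add_eq_sum]
    push_cast
    rw [Finset.sum_div, Finset.sum_mul]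
    refine Finset.sum_congr rfl fun j _ => ?_
    ring
  rw [h2, h.tsum_eq, Finset.mul_sum]
  refine Finset.sum_congr rfl fun j _ => ?_
  ring

/-- The Erlang survival function with shape `N + 1` and rate `a` has derivative minus the Erlang
density. -/
theorem hasDerivAt_erlangSurv (N : ℕ) (a t : ℝ) :
    HasDerivAt (fun t => Real.exp (-(a * t)) *
        ∑ r ∈ Finset.range (N + 1), (a * t) ^ r / (r.factorial : ℝ))
      (-(a * Real.exp (-(a * t)) * ((a * t) ^ N / N.factorial))) t := by
  have hlin : HasDerivAt (fun t : ℝ => a * t) a t := by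
    simpa using (hasDerivAt_id t).const_mul a
  have hexp : HasDerivAt (fun t : ℝ => Real.exp (-(a * t))) (Real.exp (-(a * t)) * -a) t :=
    hlin.neg.exp
  induction N with
  | zero =>
    simp only [zero_add, Finset.sum_range_one, pow_zero, Nat.factorial_zero, Nat.cast_one,
      div_one, mul_one]
    exact hexp.congr_deriv (by ring)
  | succ N ih =>
    have h1 := (hlin.fun_pow (N + 1)).div_const ((N + 1).factorial : ℝ)
    have h2 := ih.add (hexp.mul h1)
    have h3 : (fun t => Real.exp (-(a * t)) *
        ∑ r ∈ Finset.range (N + 1 + 1), (a * t) ^ r / (r.factorial : ℝ)) =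
        (fun t => Real.exp (-(a * t)) *
          ∑ r ∈ Finset.range (N + 1), (a * t) ^ r / (r.factorial : ℝ)) +
        (fun t => Real.exp (-(a * t))) * (fun t => (a * t) ^ (N + 1) / ((N + 1).factorial : ℝ)) := by
      funext t
      simp only [Pi.add_apply, Pi.mul_apply]
      rw [Finset.sum_range_succ, mul_add]
    rw [h3]
    refine h2.congr_deriv ?_
    rw [Nat.factorial_succ, Nat.add_sub_cancel]
    push_cast
    have : (N : ℝ) + 1 ≠ 0 := by positivity
    field_simp
    ring

/-- Survival function of the mixture of Erlang laws with shapes `n - i + 1` and common rate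
`L * w`, with binomial weights `C(n, i) w ^ i (1 - w) ^ (n - i)`. -/
noncomputable def erlangMixSurv (n : ℕ) (L w t : ℝ) : ℝ :=
  ∑ i ∈ Finset.range (n + 1), (n.choose i : ℝ) * w ^ i * (1 - w) ^ (n - i) *
    (Real.exp (-(L * w * t)) *
      ∑ r ∈ Finset.range (n - i + 1), (L * w * t) ^ r / (r.factorial : ℝ))

/-- Density of the same mixture, indexed by `k = n - i` and with the powers of `w` collected. -/
noncomputable def erlangMixDens (n : ℕ) (L w t : ℝ) : ℝ :=
  w ^ (n + 1) * L * Real.exp (-(L * w * t)) *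
    ∑ k ∈ Finset.range (n + 1), (n.choose k : ℝ) * (L * (1 - w) * t) ^ k / k.factorial

theorem hasDerivAt_erlangMixSurv (n : ℕ) (L w t : ℝ) :
    HasDerivAt (erlangMixSurv n L w) (-erlangMixDens n L w t) t := by
  have h := HasDerivAt.fun_sum (u := Finset.range (n + 1)) fun i _ =>
    (hasDerivAt_erlangSurv (n - i) (L * w) t).const_mul
      ((n.choose i : ℝ) * w ^ i * (1 - w) ^ (n - i))
  refine h.congr_deriv ?_
  unfold erlangMixDens
  rw [← Finset.sum_range_reflect, Finset.mul_sum, ← Finset.sum_neg_distrib]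
  refine Finset.sum_congr rfl fun i hi => ?_
  have hi' : i ≤ n := Nat.lt_succ_iff.mp (Finset.mem_range.mp hi)
  obtain ⟨k, rfl⟩ := Nat.exists_eq_add_of_le hi'
  rw [show i + k + 1 - 1 - i = k by omega, show i + k - k = i by omega,
    Nat.choose_symm_add, mul_pow, mul_pow, mul_pow, mul_pow]
  ring

theorem erlangMixSurv_zero (n : ℕ) (L w : ℝ) : erlangMixSurv n L w 0 = 1 := by
  have h := add_pow w (1 - w) n
  rw [add_sub_cancel, one_pow] at h
  rw [h, erlangMixSurv]
  refine Finset.sum_congr rfl fun i _ => ?_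
  simp [Finset.sum_range_succ']
  ring

theorem integral_erlangMixDens (n : ℕ) (L w x : ℝ) :
    ∫ t in (0 : ℝ)..x, erlangMixDens n L w t = 1 - erlangMixSurv n L w x := by
  have hc : Continuous (erlangMixDens n L w) := by
    unfold erlangMixDens
    fun_prop
  rw [intervalIntegral.integral_eq_sub_of_hasDerivAt (f := fun t => -erlangMixSurv n L w t)
    (fun t _ => (hasDerivAt_erlangMixSurv n L w t).neg.congr_deriv (neg_neg _))
    (hc.intervalIntegrable _ _), erlangMixSurv_zero]
  ring

theorem stmt9 (m : ℕ) (hm : 1 ≤ m) (g K Δ x : ℝ) (hg : 0 < g) (hK : 0 < K)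
    (hΔ0 : 0 ≤ Δ) (hΔ1 : Δ ≤ 1) (hx : 0 ≤ x) :
    ∫ t in (0 : ℝ)..x, fFTR g (m : ℝ) K Δ t =
      1 - (1 / π) * ∫ θ in (0 : ℝ)..π,
        ∑ i ∈ Finset.range m, Cmix m K Δ θ i * Real.exp (-x / Ωmix m g K Δ θ) *
          ∑ r ∈ Finset.range (m - i), (x / Ωmix m g K Δ θ) ^ r / (Nat.factorial r : ℝ) := by
  obtain ⟨n, rfl⟩ := Nat.exists_eq_add_of_le' hm
  set L : ℝ := (1 + K) / g with hL
  have hu : ∀ θ : ℝ, 0 ≤ K * (1 + Δ * Real.cos θ) := fun θ =>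
    mul_nonneg hK.le (by nlinarith [Real.neg_one_le_cos θ])
  have hM : (0 : ℝ) < ((n + 1 : ℕ) : ℝ) := by positivity
  have hMu : ∀ θ : ℝ, ((n + 1 : ℕ) : ℝ) + K * (1 + Δ * Real.cos θ) ≠ 0 := fun θ =>
    (add_pos_of_pos_of_nonneg hM (hu θ)).ne'
  let w : ℝ → ℝ := fun θ => ((n + 1 : ℕ) : ℝ) / (((n + 1 : ℕ) : ℝ) + K * (1 + Δ * Real.cos θ))
  have hw : ∀ θ, w θ = ((n + 1 : ℕ) : ℝ) / (((n + 1 : ℕ) : ℝ) + K * (1 + Δ * Real.cos θ)) :=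
    fun _ => rfl
  have hw1 : ∀ θ, 1 - w θ =
      (K * (1 + Δ * Real.cos θ)) / (((n + 1 : ℕ) : ℝ) + K * (1 + Δ * Real.cos θ)) := fun θ => by
    rw [hw, one_sub_div (hMu θ), add_sub_cancel_left]
  have hwc : Continuous w := by
    refine Continuous.div (by fun_prop) (by fun_prop) hMu
  have hdens : ∀ t, fFTR g ((n + 1 : ℕ) : ℝ) K Δ t =
      (1 / π) * ∫ θ in (0 : ℝ)..π, erlangMixDens n L (w θ) t := by
    intro t
    unfold fFTR
    congr 1
    refine intervalIntegral.integral_congr fun θ _ => ?_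
    have hz : K * (1 + K) * (1 + Δ * Real.cos θ) * t /
        (g * (((n + 1 : ℕ) : ℝ) + K * (1 + Δ * Real.cos θ))) = L * (1 - w θ) * t := by
      rw [hw1, hL]
      have := hMu θ
      field_simp
    -- The exponentials combine: `-L t + L (1 - w) t = -L w t`.
    have he : Real.exp (-(L * w θ * t)) =
        Real.exp (-(1 + K) * t / g) * Real.exp (L * (1 - w θ) * t) := by
      rw [← Real.exp_add]
      congr 1
      rw [hL]
      ring
    rw [hz, hyp1F1_natCast_succ, Real.rpow_natCast, ← hw, erlangMixDens, he]
    ring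
  have hsurv : ∀ θ, ∑ i ∈ Finset.range (n + 1), Cmix (n + 1) K Δ θ i *
      Real.exp (-x / Ωmix (n + 1) g K Δ θ) * ∑ r ∈ Finset.range (n + 1 - i),
        (x / Ωmix (n + 1) g K Δ θ) ^ r / (Nat.factorial r : ℝ) =
      erlangMixSurv n L (w θ) x := by
    intro θ
    have hΩ : x / Ωmix (n + 1) g K Δ θ = L * w θ * x := by
      rw [hw, hL, Ωmix]
      have := hMu θ
      have : 1 + K ≠ 0 := by positivity
      field_simp
    unfold erlangMixSurv
    refine Finset.sum_congr rfl fun i hi => ?_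
    have hi' : i ≤ n := Nat.lt_succ_iff.mp (Finset.mem_range.mp hi)
    have hC : Cmix (n + 1) K Δ θ i = (n.choose i : ℝ) * w θ ^ i * (1 - w θ) ^ (n - i) := by
      rw [hw1, hw, Cmix, Nat.add_sub_cancel, div_pow, div_pow]
      rw [mul_div_assoc', mul_div_assoc', div_mul_eq_mul_div, div_div, ← pow_add, Nat.add_sub_cancel' hi']
    rw [hC, neg_div, hΩ, Nat.sub_add_comm hi', mul_assoc]
  simp_rw [hdens, hsurv]
  rw [intervalIntegral.integral_const_mul]
  have hjc : Continuous (Function.uncurry fun t θ => erlangMixDens n L (w θ) t) := by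
    unfold erlangMixDens Function.uncurry
    fun_prop
  have hsc : Continuous fun θ => erlangMixSurv n L (w θ) x := by
    unfold erlangMixSurv
    fun_prop
  rw [MeasureTheory.intervalIntegral_intervalIntegral_swap
    ((hjc.continuousOn.integrableOn_compact (isCompact_uIcc.prod isCompact_uIcc)).mono_set
      (Set.prod_mono Set.uIoc_subset_uIcc Set.uIoc_subset_uIcc))]
  simp_rw [integral_erlangMixDens]
  rw [intervalIntegral.integral_sub (by simp) (hsc.intervalIntegrable _ _),
    intervalIntegral.integral_const, smul_eq_mul, mul_one, sub_zero, mul_sub,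
    one_div_mul_cancel Real.pi_ne_zero]
end

section
/- Let m ≥ 1 and n ≥ 0 be integers, γ̄ > 0, K > 0, 0 ≤ Δ ≤ 1, Λ ≥ 0 and s ≤ 0. Then the incomplete generalized moment generating function of the FTR model satisfies ∫_Λ^∞ xⁿ exp(sx) f_FTR(x; γ̄, m, K, Δ) dx = (1/π) ∫₀^π Σ_{i=0}^{m−1} C_i(θ) · ( Ω(θ)^{−(m−i)} / (1/Ω(θ) − s)^{m−i+n} ) · ( (m−i+n−1)! / (m−i−1)! ) · exp(−(1/Ω(θ) − s)Λ) · Σ_{j=0}^{m−i+n−1} ( (1/Ω(θ) − s)Λ )^j / j! dθ, where C_i(θ) = C(m−1,i) · m^i (K(1+Δcos θ))^{m−1−i} / (m + K(1+Δcos θ))^{m−1} and Ω(θ) = (γ̄/(1+K)) · (m + K(1+Δcos θ))/m. -/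
/-!
For an integer first parameter the Kummer function `₁F₁(m; 1; z)` is `exp z` times a polynomial:
the series has `k`-th coefficient `C(m - 1 + k, m - 1) / k!`, and Vandermonde's identity splits this
binomial into `∑ i, C(m - 1, i) C(k, m - 1 - i)`, where each `∑ k, C(k, l) z ^ k / k!` is
`z ^ l / l! * exp z` (`hyp1F1_natCast`). Hence for each angle `θ` the integrand of the FTR density
is a finite mixture of Gamma densities with shapes `m - i`, common scale `Ω(θ)` and weights
`C_i(θ)` (`integrand_eq_mixture`).

The frequencies `1 / Ω(θ)` are bounded below by a positive constant and the weights are bounded, so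
the integrand is dominated by a product function and Fubini's theorem swaps the integrals in `x`
and `θ`. What remains is the incomplete Gamma integral with an integer exponent
(`integral_pow_mul_exp`), which has an elementary primitive.
-/

open MeasureTheory Real

/-! ### The incomplete Gamma integral with integer exponent -/

lemma hasDerivAt_exp_mul_sum (p : ℕ) (y : ℝ) :
    HasDerivAt (fun y : ℝ => Real.exp (-y) * ∑ j ∈ Finset.range (p + 1), y ^ j / (j.factorial : ℝ))
      (-(y ^ p / (p.factorial : ℝ) * Real.exp (-y))) y := by
  have he : HasDerivAt (fun y : ℝ => Real.exp (-y)) (-Real.exp (-y)) y := by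
    simpa using (hasDerivAt_neg y).exp
  induction p with
  | zero => simpa using he
  | succ p ih =>
    have h2 := ih.add (he.mul ((hasDerivAt_pow (p + 1) y).div_const ((p + 1).factorial : ℝ)))
    have hfun : (fun y : ℝ => Real.exp (-y) *
        ∑ j ∈ Finset.range (p + 1 + 1), y ^ j / (j.factorial : ℝ)) =
        (fun y : ℝ => Real.exp (-y) * ∑ j ∈ Finset.range (p + 1), y ^ j / (j.factorial : ℝ)) +
          (fun y : ℝ => Real.exp (-y)) * fun y : ℝ => y ^ (p + 1) / ((p + 1).factorial : ℝ) := by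
      funext y
      simp only [Pi.add_apply, Pi.mul_apply]
      rw [Finset.sum_range_succ _ (p + 1), mul_add]
    rw [hfun]
    refine HasDerivAt.congr_deriv h2 ?_
    have : (p.factorial : ℝ) ≠ 0 := by positivity
    rw [Nat.factorial_succ]
    push_cast
    field_simp
    ring

lemma tendsto_exp_mul_sum (p : ℕ) :
    Filter.Tendsto
      (fun y : ℝ => Real.exp (-y) * ∑ j ∈ Finset.range (p + 1), y ^ j / (j.factorial : ℝ))
      Filter.atTop (nhds 0) := by
  have h : ∀ j ∈ Finset.range (p + 1), Filter.Tendsto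
      (fun y : ℝ => (y ^ j * Real.exp (-y)) / (j.factorial : ℝ)) Filter.atTop (nhds 0) := by
    intro j _
    simpa using (Real.tendsto_pow_mul_exp_neg_atTop_nhds_zero j).div_const (j.factorial : ℝ)
  have h2 := tendsto_finsetSum _ h
  simp only [Finset.sum_const_zero] at h2
  refine h2.congr fun y => ?_
  rw [Finset.mul_sum]
  exact Finset.sum_congr rfl fun j _ => by ring

/-- A primitive of `x ^ p * exp (-β x)`, the one that vanishes at infinity, for `β > 0`. -/
noncomputable def incGammaPrim (p : ℕ) (β x : ℝ) : ℝ :=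
  -((p.factorial : ℝ) / β ^ (p + 1)) *
    (Real.exp (-(β * x)) * ∑ j ∈ Finset.range (p + 1), (β * x) ^ j / (j.factorial : ℝ))

lemma hasDerivAt_incGammaPrim (p : ℕ) {β : ℝ} (hβ : 0 < β) (x : ℝ) :
    HasDerivAt (incGammaPrim p β) (x ^ p * Real.exp (-(β * x))) x := by
  have h := ((hasDerivAt_exp_mul_sum p (β * x)).comp x
    ((hasDerivAt_id x).const_mul β)).const_mul (-((p.factorial : ℝ) / β ^ (p + 1)))
  refine HasDerivAt.congr_deriv h ?_
  have : (p.factorial : ℝ) ≠ 0 := by positivity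
  field_simp
  ring

lemma tendsto_incGammaPrim (p : ℕ) {β : ℝ} (hβ : 0 < β) :
    Filter.Tendsto (incGammaPrim p β) Filter.atTop (nhds 0) := by
  have h := ((tendsto_exp_mul_sum p).comp
    (Filter.tendsto_id.const_mul_atTop hβ)).const_mul (-((p.factorial : ℝ) / β ^ (p + 1)))
  rw [mul_zero] at h
  exact h

lemma integrableOn_pow_mul_exp (p : ℕ) {β Λ : ℝ} (hβ : 0 < β) (hΛ : 0 ≤ Λ) :
    IntegrableOn (fun x : ℝ => x ^ p * Real.exp (-(β * x))) (Set.Ioi Λ) :=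
  integrableOn_Ioi_deriv_of_nonneg' (fun x _ => hasDerivAt_incGammaPrim p hβ x)
    (fun x hx => by have : 0 < x := hΛ.trans_lt hx; positivity) (tendsto_incGammaPrim p hβ)

lemma integral_pow_mul_exp (p : ℕ) {β Λ : ℝ} (hβ : 0 < β) (hΛ : 0 ≤ Λ) :
    ∫ x in Set.Ioi Λ, x ^ p * Real.exp (-(β * x)) =
      (p.factorial : ℝ) / β ^ (p + 1) *
        (Real.exp (-(β * Λ)) * ∑ j ∈ Finset.range (p + 1), (β * Λ) ^ j / (j.factorial : ℝ)) := by
  rw [integral_Ioi_of_hasDerivAt_of_nonneg' (fun x _ => hasDerivAt_incGammaPrim p hβ x)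
    (fun x hx => by have : 0 < x := hΛ.trans_lt hx; positivity) (tendsto_incGammaPrim p hβ)]
  simp only [incGammaPrim]
  ring

/-! ### The Kummer function with integer first parameter -/

lemma poch_natCast (M k : ℕ) :
    poch ((M + 1 : ℕ) : ℝ) k = ((M + k).choose M : ℝ) * (k.factorial : ℝ) := by
  have h1 : poch ((M + 1 : ℕ) : ℝ) k = ((M + 1).ascFactorial k : ℝ) := by
    rw [Nat.ascFactorial_eq_prod_range, poch]
    push_cast
    rfl
  have h2 := Nat.ascFactorial_eq_factorial_mul_choose M k
  rw [h1, h2, Nat.choose_symm_add]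
  push_cast
  ring

lemma hasSum_choose_mul_pow (l : ℕ) (z : ℝ) :
    HasSum (fun k : ℕ => (k.choose l : ℝ) * (z ^ k / (k.factorial : ℝ)))
      (z ^ l / (l.factorial : ℝ) * Real.exp z) := by
  -- The terms with `k < l` vanish, and the rest is a multiple of the exponential series.
  rw [← hasSum_nat_add_iff' l]
  have h0 : ∑ k ∈ Finset.range l, (k.choose l : ℝ) * (z ^ k / (k.factorial : ℝ)) = 0 :=
    Finset.sum_eq_zero fun k hk => by
      rw [Nat.choose_eq_zero_of_lt (Finset.mem_range.1 hk)]; simp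
  rw [h0, sub_zero]
  have he : HasSum (fun k : ℕ => z ^ k / (k.factorial : ℝ)) (Real.exp z) := by
    rw [Real.exp_eq_exp_ℝ]
    exact NormedSpace.expSeries_div_hasSum_exp z
  refine (he.mul_left (z ^ l / (l.factorial : ℝ))).congr_fun ?_
  intro k
  have h : (((k + l).choose l : ℕ) : ℝ) * (k.factorial : ℝ) * (l.factorial : ℝ) =
      ((k + l).factorial : ℝ) := by
    exact_mod_cast Nat.add_choose_mul_factorial_mul_factorial k l
  have hk : (k.factorial : ℝ) ≠ 0 := by positivity
  have hl : (l.factorial : ℝ) ≠ 0 := by positivity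
  have hkl : ((k + l).factorial : ℝ) ≠ 0 := by positivity
  field_simp
  rw [← h]
  ring

/-- Kummer's transformation for an integer first parameter: `₁F₁(-M; 1; -z)` is a polynomial, here
summed in order of decreasing degree to match the indexing of `Cmix`. -/
lemma hyp1F1_natCast (M : ℕ) (z : ℝ) :
    hyp1F1 ((M + 1 : ℕ) : ℝ) z = ∑ i ∈ Finset.range (M + 1),
      (M.choose i : ℝ) * (z ^ (M - i) / ((M - i).factorial : ℝ) * Real.exp z) := by
  have h := hasSum_sum (s := Finset.range (M + 1)) fun i _ =>
    (hasSum_choose_mul_pow (M - i) z).mul_left (M.choose i : ℝ)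
  rw [hyp1F1, ← h.tsum_eq]
  refine tsum_congr fun k => ?_
  rw [poch_natCast, Nat.add_choose_eq, Finset.Nat.sum_antidiagonal_eq_sum_range_succ_mk]
  push_cast
  have hk : (k.factorial : ℝ) ≠ 0 := by positivity
  rw [Finset.sum_mul, Finset.sum_mul, Finset.sum_div]
  refine Finset.sum_congr rfl fun i _ => ?_
  field_simp

/-! ### The Gamma mixture and its Fubini domination -/

/-- For a fixed angle, with `a = K (1 + Δ cos θ)` and `b = (1 + K) / γ̄`, the integrand of the FTR
density is a mixture of Gamma densities of scale `Ω = (m + a) / (b m)`. -/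
lemma integrand_eq_mixture (M : ℕ) (g K Δ θ x : ℝ) (hg : 0 < g) (hK : 0 < K)
    (hA : 0 < ((M + 1 : ℕ) : ℝ) + K * (1 + Δ * Real.cos θ)) :
    (((M + 1 : ℕ) : ℝ) / (((M + 1 : ℕ) : ℝ) + K * (1 + Δ * Real.cos θ))) ^ (((M + 1 : ℕ) : ℝ)) *
        ((1 + K) / g) * Real.exp (-(1 + K) * x / g) *
      hyp1F1 ((M + 1 : ℕ) : ℝ) (K * (1 + K) * (1 + Δ * Real.cos θ) * x /
        (g * (((M + 1 : ℕ) : ℝ) + K * (1 + Δ * Real.cos θ)))) =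
    ∑ i ∈ Finset.range (M + 1), Cmix (M + 1) K Δ θ i *
      (1 / Ωmix (M + 1) g K Δ θ ^ (M + 1 - i)) * (1 / ((M - i).factorial : ℝ)) *
        (x ^ (M - i) * Real.exp (-(1 / Ωmix (M + 1) g K Δ θ * x))) := by
  rw [hyp1F1_natCast, Finset.mul_sum, Real.rpow_natCast]
  have hm : 0 < ((M + 1 : ℕ) : ℝ) := by positivity
  refine Finset.sum_congr rfl fun i hi => ?_
  obtain ⟨l, rfl⟩ := Nat.exists_eq_add_of_le (Nat.lt_succ_iff.1 (Finset.mem_range.1 hi))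
  have e1 : i + l - i = l := by omega
  have e2 : i + l + 1 - i = l + 1 := by omega
  have e3 : i + l + 1 - 1 = i + l := by omega
  simp only [Cmix, Ωmix, e1, e2, e3]
  set c := 1 + Δ * Real.cos θ with hc
  set μ := ((i + l + 1 : ℕ) : ℝ) with hμ
  have hexp : Real.exp (-(1 / (g / (1 + K) * ((μ + K * c) / μ)) * x)) =
      Real.exp (-(1 + K) * x / g) * Real.exp (K * (1 + K) * c * x / (g * (μ + K * c))) := by
    rw [← Real.exp_add]
    congr 1
    field_simp
    ring
  rw [hexp]
  have hl : (l.factorial : ℝ) ≠ 0 := by positivity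
  have hK1 : (1 + K) ≠ 0 := by positivity
  generalize Real.exp (-(1 + K) * x / g) = E1
  generalize Real.exp (K * (1 + K) * c * x / (g * (μ + K * c))) = E2
  have hg' := hg.ne'
  have hA' := hA.ne'
  have hm' := hm.ne'
  simp only [div_pow, mul_pow, pow_add, pow_one]
  field_simp

lemma Ωmix_bounds (M : ℕ) (g K Δ θ : ℝ) (hg : 0 < g) (hK : 0 < K) (hΔ0 : 0 ≤ Δ) (hΔ1 : Δ ≤ 1) :
    0 < ((M + 1 : ℕ) : ℝ) + K * (1 + Δ * Real.cos θ) ∧ 0 < Ωmix (M + 1) g K Δ θ ∧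
      Ωmix (M + 1) g K Δ θ ≤
        (g / (1 + K)) * ((((M + 1 : ℕ) : ℝ) + K * 2) / ((M + 1 : ℕ) : ℝ)) := by
  have hm : 0 < ((M + 1 : ℕ) : ℝ) := by positivity
  have h1 : 0 ≤ 1 + Δ * Real.cos θ := by nlinarith [Real.neg_one_le_cos θ]
  have h2 : 1 + Δ * Real.cos θ ≤ 2 := by nlinarith [Real.cos_le_one θ]
  have hA : 0 < ((M + 1 : ℕ) : ℝ) + K * (1 + Δ * Real.cos θ) := by positivity
  refine ⟨hA, by unfold Ωmix; positivity, ?_⟩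
  unfold Ωmix
  gcongr

/-- Integrability on the product space of one mixture component: it is dominated by
`|c θ| * (x ^ p * exp (-β₀ x))`, a product of integrable functions. -/
lemma integrable_component (p : ℕ) {β₀ Λ : ℝ} (hβ₀ : 0 < β₀) (hΛ : 0 ≤ Λ) {c β : ℝ → ℝ}
    (hc : Continuous c) (hβ : Continuous β) (hle : ∀ θ, β₀ ≤ β θ) :
    Integrable (fun q : ℝ × ℝ => c q.2 * (q.1 ^ p * Real.exp (-(β q.2 * q.1))))
      ((volume.restrict (Set.Ioi Λ)).prod (volume.restrict (Set.Ioc 0 π))) := by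
  have hci : Integrable c (volume.restrict (Set.Ioc 0 π)) :=
    (hc.integrableOn_Icc (a := 0) (b := π)).mono_set Set.Ioc_subset_Icc_self
  have hdom := (integrableOn_pow_mul_exp p hβ₀ hΛ).mul_prod hci.norm
  refine hdom.mono' (by fun_prop : Continuous _).aestronglyMeasurable ?_
  rw [Measure.prod_restrict]
  filter_upwards [ae_restrict_mem (measurableSet_Ioi.prod measurableSet_Ioc)] with q hq
  have hq0 : 0 < q.1 := hΛ.trans_lt hq.1
  rw [norm_mul, mul_comm, Real.norm_of_nonneg (by positivity :
    0 ≤ q.1 ^ p * Real.exp (-(β q.2 * q.1)))]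
  have := hle q.2
  gcongr

theorem stmt12 (m n : ℕ) (hm : 1 ≤ m) (g K Δ Λ s : ℝ) (hg : 0 < g) (hK : 0 < K)
    (hΔ0 : 0 ≤ Δ) (hΔ1 : Δ ≤ 1) (hΛ : 0 ≤ Λ) (hs : s ≤ 0) :
    ∫ x in Set.Ioi Λ, x ^ n * Real.exp (s * x) * fFTR g (m : ℝ) K Δ x =
      (1 / π) * ∫ θ in (0 : ℝ)..π,
        ∑ i ∈ Finset.range m, Cmix m K Δ θ i *
          ((1 / (Ωmix m g K Δ θ) ^ (m - i)) / (1 / Ωmix m g K Δ θ - s) ^ (m - i + n)) *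
          ((Nat.factorial (m - i + n - 1) : ℝ) / (Nat.factorial (m - i - 1) : ℝ)) *
          Real.exp (-(1 / Ωmix m g K Δ θ - s) * Λ) *
          ∑ j ∈ Finset.range (m - i + n),
            ((1 / Ωmix m g K Δ θ - s) * Λ) ^ j / (Nat.factorial j : ℝ) := by
  obtain ⟨M, rfl⟩ : ∃ M, m = M + 1 := ⟨m - 1, by omega⟩
  have hB := fun θ => Ωmix_bounds M g K Δ θ hg hK hΔ0 hΔ1
  have hm0 : 0 < ((M + 1 : ℕ) : ℝ) := by positivity
  -- A lower bound for the frequencies `1 / Ω(θ) - s`, from `Ω(θ)` at `cos θ = 1`, `Δ = 1`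
  -- and from `s ≤ 0`.
  obtain ⟨β₀, hβ₀, hβle⟩ : ∃ β₀ : ℝ, 0 < β₀ ∧ ∀ θ, β₀ ≤ 1 / Ωmix (M + 1) g K Δ θ - s := by
    refine ⟨1 / ((g / (1 + K)) * ((((M + 1 : ℕ) : ℝ) + K * 2) / ((M + 1 : ℕ) : ℝ))),
      by positivity, fun θ => ?_⟩
    have := one_div_le_one_div_of_le (hB θ).2.1 (hB θ).2.2
    linarith
  have hΩc : Continuous fun θ => Ωmix (M + 1) g K Δ θ := by unfold Ωmix; fun_prop
  have hβc : Continuous fun θ => 1 / Ωmix (M + 1) g K Δ θ - s :=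
    (continuous_const.div hΩc fun θ => (hB θ).2.1.ne').sub continuous_const
  have hcc : ∀ i, Continuous fun θ => Cmix (M + 1) K Δ θ i *
      (1 / Ωmix (M + 1) g K Δ θ ^ (M + 1 - i)) * (1 / ((M - i).factorial : ℝ)) := by
    intro i
    have h1 : Continuous fun θ => Cmix (M + 1) K Δ θ i := by
      unfold Cmix
      exact Continuous.div (by fun_prop) (by fun_prop) fun θ => pow_ne_zero _ (hB θ).1.ne'
    exact (h1.mul (continuous_const.div (hΩc.pow _) fun θ => pow_ne_zero _ (hB θ).2.1.ne')).mul
      continuous_const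
  have hint := fun i => integrable_component (n + (M - i)) hβ₀ hΛ (hcc i) hβc hβle
  have hpt : ∀ x : ℝ, x ^ n * Real.exp (s * x) * fFTR g ((M + 1 : ℕ) : ℝ) K Δ x =
      (1 / π) * ∫ θ in Set.Ioc 0 π, ∑ i ∈ Finset.range (M + 1), Cmix (M + 1) K Δ θ i *
        (1 / Ωmix (M + 1) g K Δ θ ^ (M + 1 - i)) * (1 / ((M - i).factorial : ℝ)) *
          (x ^ (n + (M - i)) * Real.exp (-((1 / Ωmix (M + 1) g K Δ θ - s) * x))) := by
    intro x
    rw [fFTR, intervalIntegral.integral_of_le Real.pi_pos.le, mul_left_comm,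
      ← integral_const_mul]
    congr 2
    funext θ
    rw [integrand_eq_mixture M g K Δ θ x hg hK (hB θ).1, Finset.mul_sum]
    refine Finset.sum_congr rfl fun i _ => ?_
    have he : Real.exp (-((1 / Ωmix (M + 1) g K Δ θ - s) * x)) =
        Real.exp (s * x) * Real.exp (-(1 / Ωmix (M + 1) g K Δ θ * x)) := by
      rw [← Real.exp_add]
      congr 1
      ring
    rw [he, pow_add]
    ring
  simp only [hpt]
  rw [integral_const_mul, integral_integral_swap (integrable_finsetSum _ fun i _ => hint i),
    intervalIntegral.integral_of_le Real.pi_pos.le]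
  congr 2
  funext θ
  have hβ : 0 < 1 / Ωmix (M + 1) g K Δ θ - s := hβ₀.trans_le (hβle θ)
  rw [integral_finsetSum _ fun i _ => (integrableOn_pow_mul_exp _ hβ hΛ).const_mul _]
  refine Finset.sum_congr rfl fun i hi => ?_
  rw [integral_const_mul, integral_pow_mul_exp _ hβ hΛ]
  have hi' := Finset.mem_range.1 hi
  have e1 : M + 1 - i + n = n + (M - i) + 1 := by omega
  have e2 : M + 1 - i - 1 = M - i := by omega
  rw [e1, e2, Nat.add_sub_cancel, neg_mul]
  ring
end
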